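/- Let ε > 0 and u⁰ ∈ ℝ with u⁰ < 0. The function φ(x) = 2u⁰(1+u⁰)e^{u⁰ x/ε} / (1 − u⁰ − (1+u⁰)e^{u⁰ x/ε}), defined for x ≥ 0 when the denominator is nonzero, satisfies the first-order corrector equation −ε φ'(x) + u⁰ φ(x) + φ(x)²/2 = 0 and φ(0) = −1 − u⁰. -/

import Mathlib

/-!
With `E x = exp (u⁰ x / ε)` and `c = 1 + u⁰`, write `φ = 2 u⁰ c q` where `q = E / (1 - u⁰ - c E)`.
Since `1 / q = (1 - u⁰) / E - c` is an affine function of the exponential `1 / E`, it solves a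
linear equation; inverting, `q` solves the Bernoulli equation `q' = (u⁰ / ε) (q + c q²)`, and the
factor `2 u⁰ c` rescales this to `ε φ' = u⁰ φ + φ² / 2`.
-/

theorem hasDerivAt_div_const_sub_const_mul_self {𝕜 𝕜' : Type*} [NontriviallyNormedField 𝕜]
    [NontriviallyNormedField 𝕜'] [NormedAlgebra 𝕜 𝕜'] {E : 𝕜 → 𝕜'} {k b c : 𝕜'} {x : 𝕜}
    (hE : HasDerivAt E (k * E x) x) (hD : b - c * E x ≠ 0) :
    HasDerivAt (fun y => E y / (b - c * E y))
      (k * (E x / (b - c * E x) + c * (E x / (b - c * E x)) ^ 2)) x := by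
  convert hE.fun_div ((hE.const_mul c).const_sub b) hD using 1
  field_simp
  ring

theorem hasDerivAt_exp_const_mul_div_const {𝕜 : Type*} [RCLike 𝕜] (a b x : 𝕜) :
    HasDerivAt (fun y => NormedSpace.exp (a * y / b)) (a / b * NormedSpace.exp (a * x / b)) x := by
  have hlin : HasDerivAt (fun y : 𝕜 => a * y / b) (a / b) x := by
    simpa only [mul_one, id] using ((hasDerivAt_id x).const_mul a).div_const b
  simpa only [mul_comm, Function.comp_def] using
    (hasDerivAt_exp (𝕂 := 𝕜) (x := a * x / b)).comp x hlin

theorem burgers_corrector_general {𝕜 : Type*} [RCLike 𝕜] (ε u0 : 𝕜) (hε : ε ≠ 0) (hu0 : u0 ≠ 0)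
    (φ : 𝕜 → 𝕜)
    (hφ : ∀ x, φ x = 2 * u0 * (1 + u0) * NormedSpace.exp (u0 * x / ε) /
        (1 - u0 - (1 + u0) * NormedSpace.exp (u0 * x / ε))) :
    (∀ x, 1 - u0 - (1 + u0) * NormedSpace.exp (u0 * x / ε) ≠ 0 →
      DifferentiableAt 𝕜 φ x ∧ -ε * deriv φ x + u0 * φ x + φ x ^ 2 / 2 = 0) ∧
      φ 0 = -1 - u0 := by
  constructor
  · intro x hD
    let q : 𝕜 → 𝕜 := fun y => NormedSpace.exp (u0 * y / ε) /
      (1 - u0 - (1 + u0) * NormedSpace.exp (u0 * y / ε))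
    have hq : HasDerivAt q (u0 / ε * (q x + (1 + u0) * q x ^ 2)) x :=
      hasDerivAt_div_const_sub_const_mul_self (hasDerivAt_exp_const_mul_div_const u0 ε x) hD
    have hφq : φ = fun y => 2 * u0 * (1 + u0) * q y :=
      funext fun y => (hφ y).trans (mul_div_assoc _ _ _)
    have hφ' : HasDerivAt φ
        (2 * u0 * (1 + u0) * (u0 / ε * (q x + (1 + u0) * q x ^ 2))) x :=
      hφq ▸ hq.const_mul (2 * u0 * (1 + u0))
    refine ⟨hφ'.differentiableAt, ?_⟩
    rw [hφ'.deriv, hφq]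
    field_simp
    ring
  · have hD : 1 - u0 - (1 + u0) = -2 * u0 := by ring
    rw [hφ, mul_zero, zero_div, NormedSpace.exp_zero, mul_one, mul_one, hD]
    field_simp
    ring

theorem burgers_corrector (ε u0 : ℝ) (hε : 0 < ε) (hu0 : -1 < u0) (hu0' : u0 < 0)
    (φ : ℝ → ℝ)
    (hφ : ∀ x, φ x = 2 * u0 * (1 + u0) * Real.exp (u0 * x / ε) /
        (1 - u0 - (1 + u0) * Real.exp (u0 * x / ε))) :
    (∀ x ≥ (0:ℝ), 1 - u0 - (1 + u0) * Real.exp (u0 * x / ε) ≠ 0 →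
      -ε * deriv φ x + u0 * φ x + φ x ^ 2 / 2 = 0) ∧ φ 0 = -1 - u0 := by
  simp only [Real.exp_eq_exp_ℝ] at hφ ⊢
  exact (burgers_corrector_general ε u0 hε.ne' hu0'.ne φ hφ).imp_left
    fun hode x _ hD => (hode x hD).2
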